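/- arXiv:1810.13176 — 3 statements merged into one kernel-verified Lean document; each statement's English description precedes it below -/
import Mathlib

section
/- Let p and q be parameters in 𝒫 (with entries a_{k,i}, b_{k,i} and a′_{k,i}, b′_{k,i} respectively). If N_p = N_q as polynomials in ℂ[x,y], and the first-level coefficients agree (a_{1,i} = a′_{1,i} for all 1 ≤ i ≤ N−1 and b_{1,i} = b′_{1,i} for all 1 ≤ i ≤ M−2), then p = q, i.e. a_{k,i} = a′_{k,i} and b_{k,i} = b′_{k,i} for all admissible indices. -/
open MvPolynomial

/-- The normal form `N_p` as a polynomial in `ℂ[x,y]`. -/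
noncomputable def Npoly (M N : ℕ) (a b : ℕ → ℕ → ℂ) : MvPolynomial (Fin 2) ℂ :=
  X 0 * X 1 * (X 1 + X 0 ^ 2) *
    (∏ i ∈ Finset.Icc 1 (N - 1),
      (X 1 + ∑ k ∈ Finset.Icc 1 i, C (a k i) * X 0 * X 1 ^ (k - 1))) *
    (∏ i ∈ Finset.Icc 1 (M - 2),
      (X 1 + ∑ k ∈ Finset.Icc 1 (N - 1 + 2 * i), C (b k i) * X 0 ^ (k + 1)))

/-- The parameter space `𝒫`. -/
def memP (M N : ℕ) (a b : ℕ → ℕ → ℂ) : Prop :=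
  (∀ i ∈ Finset.Icc 1 (N - 1), a 1 i ≠ 0) ∧
  (∀ i ∈ Finset.Icc 1 (M - 2), b 1 i ≠ 0 ∧ b 1 i ≠ 1) ∧
  (∀ i ∈ Finset.Icc 1 (N - 1), ∀ j ∈ Finset.Icc 1 (N - 1), i ≠ j → a 1 i ≠ a 1 j) ∧
  (∀ i ∈ Finset.Icc 1 (M - 2), ∀ j ∈ Finset.Icc 1 (M - 2), i ≠ j → b 1 i ≠ b 1 j)

/-!
Write the factors of the normal form as `y + x A(y)` and `y + x² B(x)`, and cancel the common factor
`x y (y + x²)`. Substituting `y = -x² B₀(x)` into the product, some factor vanishes. If it is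
`y + x² B(x)`, then `B = B₀`; if it is `y + x A(y)`, then `x B₀(x) = A(-x² B₀(x))`, which forces
`B₀ = 0` because the right-hand side is `A(0)` modulo `x² B₀`. So each nonzero `B` of one
factorization occurs in the other, and the distinct constant terms tell which one it is; a zero `B`
must then correspond to a zero `B`. Once the factors `y + x² B(x)` are cancelled, the substitution
`x = -y / A₀(y)` treats the factors `y + x A(y)` in the same way.
-/

open scoped Polynomial

/-- The exceptional value `z` is harmless: wherever one family takes it, matching the value of the
other family shows that it takes it too. -/
theorem eq_of_forall_eq_or_exists_eq {ι α β : Type*} {s : Finset ι} {u u' : ι → α} {c : α → β}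
    {z : α} (hinj : Set.InjOn (fun i ↦ c (u i)) s) (hc : ∀ i ∈ s, c (u i) = c (u' i))
    (h : ∀ i ∈ s, u i = z ∨ ∃ j ∈ s, u' j = u i)
    (h' : ∀ i ∈ s, u' i = z ∨ ∃ j ∈ s, u j = u' i) : ∀ i ∈ s, u i = u' i := by
  intro i hi
  rcases h i hi with hz | ⟨j, hj, hji⟩
  · rcases h' i hi with hz' | ⟨j, hj, hji⟩
    · rw [hz, hz']
    · have hij : j = i := hinj hj hi (by simp only [hji, hc i hi])
      rw [← hji, hij]
  · have hij : j = i := hinj hj hi (by simp only [hc j hj, hji])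
    rw [← hji, hij]

section Branches

variable {R : Type*} [CommRing R]

/-- The curve `y + x A(y) = 0`: for `A(0) ≠ 0`, a smooth branch at the origin transverse to both
coordinate axes. -/
noncomputable def transverseBranch (A : R[X]) : MvPolynomial (Fin 2) R :=
  X 1 + X 0 * Polynomial.aeval (X 1) A

/-- The curve `y + x² B(x) = 0`, a smooth branch at the origin tangent to the axis `y = 0`. -/
noncomputable def tangentBranch (B : R[X]) : MvPolynomial (Fin 2) R :=
  X 1 + X 0 ^ 2 * Polynomial.aeval (X 0) B

section Aeval

variable {S : Type*} [CommRing S] [Algebra R S] (x y : S)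

@[simp]
theorem aeval_transverseBranch (A : R[X]) :
    aeval ![x, y] (transverseBranch A) = y + x * Polynomial.aeval y A := by
  simp [transverseBranch, ← Polynomial.aeval_algHom_apply]

@[simp]
theorem aeval_tangentBranch (B : R[X]) :
    aeval ![x, y] (tangentBranch B) = y + x ^ 2 * Polynomial.aeval x B := by
  simp [tangentBranch, ← Polynomial.aeval_algHom_apply]

end Aeval

theorem tangentBranch_one : tangentBranch (1 : R[X]) = X 1 + X 0 ^ 2 := by
  rw [tangentBranch, map_one, mul_one]

theorem tangentBranch_ne_zero [Nontrivial R] (B : R[X]) : tangentBranch B ≠ 0 := by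
  intro h
  simpa [h] using aeval_tangentBranch (0 : R) 1 B

variable [IsDomain R]

theorem eq_zero_of_aeval_neg_X_sq_mul_eq {A B : R[X]}
    (h : Polynomial.aeval (-(Polynomial.X ^ 2 * B)) A = Polynomial.X * B) : B = 0 := by
  set G := Polynomial.aeval (-(Polynomial.X ^ 2 * B)) A.divX
  have hsplit : Polynomial.C (A.coeff 0) - Polynomial.X ^ 2 * B * G = Polynomial.X * B := by
    have haeval := congrArg (Polynomial.aeval (-(Polynomial.X ^ 2 * B))) A.divX_mul_X_add
    rw [map_add, map_mul, Polynomial.aeval_X, Polynomial.aeval_C, h] at haeval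
    linear_combination haeval
  have hconst : A.coeff 0 = 0 := by
    simpa using congrArg (Polynomial.eval 0) hsplit
  have hunit : 1 + Polynomial.X * G ≠ 0 := fun h₀ ↦ by
    simpa using congrArg (Polynomial.eval 0) h₀
  have hprod : Polynomial.X * (1 + Polynomial.X * G) * B = 0 := by
    rw [hconst, map_zero] at hsplit
    linear_combination -hsplit
  exact (mul_eq_zero.1 hprod).resolve_left (mul_ne_zero Polynomial.X_ne_zero hunit)

variable {ι κ : Type*} {s : Finset ι} {t : Finset κ} {A A' : ι → R[X]} {B B' : κ → R[X]}

theorem eq_zero_or_exists_eq_of_tangentBranch_dvd {B₀ : R[X]}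
    (h : tangentBranch B₀ ∣
      (∏ i ∈ s, transverseBranch (A i)) * ∏ i ∈ t, tangentBranch (B i)) :
    B₀ = 0 ∨ ∃ j ∈ t, B j = B₀ := by
  have hvanish := map_dvd (aeval ![Polynomial.X, -(Polynomial.X ^ 2 * B₀)]) h
  simp only [map_mul, map_prod, aeval_transverseBranch, aeval_tangentBranch,
    Polynomial.aeval_X_left_apply, neg_add_cancel, zero_dvd_iff, mul_eq_zero,
    Finset.prod_eq_zero_iff] at hvanish
  rcases hvanish with ⟨j, -, hj⟩ | ⟨j, hjt, hj⟩
  · left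
    refine eq_zero_of_aeval_neg_X_sq_mul_eq (A := A j)
      (mul_left_cancel₀ Polynomial.X_ne_zero ?_)
    linear_combination hj
  · right
    refine ⟨j, hjt, mul_left_cancel₀ (pow_ne_zero 2 Polynomial.X_ne_zero) ?_⟩
    linear_combination hj

theorem eq_zero_or_exists_eq_of_transverseBranch_dvd {A₀ : R[X]}
    (h : transverseBranch A₀ ∣ ∏ i ∈ s, transverseBranch (A i)) :
    A₀ = 0 ∨ ∃ j ∈ s, A j = A₀ := by
  refine or_iff_not_imp_left.2 fun hA₀ ↦ ?_
  let φ := algebraMap R[X] (FractionRing R[X])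
  have hφ : Function.Injective φ := IsFractionRing.injective _ _
  have hφA₀ : φ A₀ ≠ 0 := (map_ne_zero_iff φ hφ).2 hA₀
  have hφX : φ Polynomial.X ≠ 0 := (map_ne_zero_iff φ hφ).2 Polynomial.X_ne_zero
  have haeval (P : R[X]) : Polynomial.aeval (φ Polynomial.X) P = φ P := by
    rw [Polynomial.aeval_algebraMap_apply, Polynomial.aeval_X_left_apply]
  have hvanish := map_dvd (aeval ![-(φ Polynomial.X / φ A₀), φ Polynomial.X]) h
  simp only [map_prod, aeval_transverseBranch, haeval, neg_mul, div_mul_cancel₀ _ hφA₀,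
    add_neg_cancel, zero_dvd_iff, Finset.prod_eq_zero_iff] at hvanish
  obtain ⟨j, hjs, hj⟩ := hvanish
  refine ⟨j, hjs, hφ (mul_left_cancel₀ (div_ne_zero hφX hφA₀) ?_)⟩
  rw [div_mul_cancel₀ _ hφA₀]
  linear_combination -hj

theorem eq_of_prod_transverseBranch_mul_prod_tangentBranch_eq
    (hA : Set.InjOn (fun i ↦ (A i).coeff 0) s) (hB : Set.InjOn (fun i ↦ (B i).coeff 0) t)
    (hAA' : ∀ i ∈ s, (A i).coeff 0 = (A' i).coeff 0)
    (hBB' : ∀ i ∈ t, (B i).coeff 0 = (B' i).coeff 0)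
    (h : (∏ i ∈ s, transverseBranch (A i)) * ∏ i ∈ t, tangentBranch (B i) =
      (∏ i ∈ s, transverseBranch (A' i)) * ∏ i ∈ t, tangentBranch (B' i)) :
    (∀ i ∈ s, A i = A' i) ∧ ∀ i ∈ t, B i = B' i := by
  have htangent (A : ι → R[X]) (B : κ → R[X]) : ∀ i ∈ t, tangentBranch (B i) ∣
      (∏ i ∈ s, transverseBranch (A i)) * ∏ i ∈ t, tangentBranch (B i) := fun i hi ↦
    dvd_mul_of_dvd_right (Finset.dvd_prod_of_mem (fun i ↦ tangentBranch (B i)) hi) _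
  have htransverse (A : ι → R[X]) : ∀ i ∈ s, transverseBranch (A i) ∣
      ∏ i ∈ s, transverseBranch (A i) := fun i hi ↦
    Finset.dvd_prod_of_mem (fun i ↦ transverseBranch (A i)) hi
  have hBeq : ∀ i ∈ t, B i = B' i :=
    eq_of_forall_eq_or_exists_eq (c := fun P ↦ P.coeff 0) hB hBB'
      (fun i hi ↦ eq_zero_or_exists_eq_of_tangentBranch_dvd
        ((htangent A B i hi).trans h.dvd))
      (fun i hi ↦ eq_zero_or_exists_eq_of_tangentBranch_dvd
        ((htangent A' B' i hi).trans h.symm.dvd))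
  have hprod : ∏ i ∈ s, transverseBranch (A i) = ∏ i ∈ s, transverseBranch (A' i) := by
    rw [Finset.prod_congr rfl fun i hi ↦ congrArg tangentBranch (hBeq i hi)] at h
    exact mul_right_cancel₀ (Finset.prod_ne_zero_iff.2 fun i _ ↦ tangentBranch_ne_zero (B' i)) h
  have hAeq : ∀ i ∈ s, A i = A' i :=
    eq_of_forall_eq_or_exists_eq (c := fun P ↦ P.coeff 0) hA hAA'
      (fun i hi ↦ eq_zero_or_exists_eq_of_transverseBranch_dvd
        ((htransverse A i hi).trans hprod.dvd))
      (fun i hi ↦ eq_zero_or_exists_eq_of_transverseBranch_dvd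
        ((htransverse A' i hi).trans hprod.symm.dvd))
  exact ⟨hAeq, hBeq⟩

end Branches

section NormalForm

variable {R : Type*} [CommRing R]

/-- The polynomial `c 1 + c 2 * X + ⋯ + c n * X ^ (n - 1)`, which is the `A` or `B` of a branch
of the normal form; its coefficients are numbered from `1` as in the parameters. -/
noncomputable def shiftedPolynomial (n : ℕ) (c : ℕ → R) : R[X] :=
  ∑ k ∈ Finset.Icc 1 n, Polynomial.monomial (k - 1) (c k)

theorem coeff_shiftedPolynomial {n k : ℕ} (hk : k ∈ Finset.Icc 1 n) (c : ℕ → R) :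
    (shiftedPolynomial n c).coeff (k - 1) = c k := by
  simp only [shiftedPolynomial, Polynomial.finsetSum_coeff, Polynomial.coeff_monomial]
  rw [Finset.sum_eq_single_of_mem k hk, if_pos rfl]
  intro j hj hjk
  rw [Finset.mem_Icc] at hj hk
  exact if_neg (by omega)

theorem coeff_zero_shiftedPolynomial {n : ℕ} (hn : 1 ≤ n) (c : ℕ → R) :
    (shiftedPolynomial n c).coeff 0 = c 1 :=
  coeff_shiftedPolynomial (Finset.left_mem_Icc.2 hn) c

theorem transverseBranch_shiftedPolynomial (n : ℕ) (c : ℕ → R) :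
    transverseBranch (shiftedPolynomial n c) =
      X 1 + ∑ k ∈ Finset.Icc 1 n, C (c k) * X 0 * X 1 ^ (k - 1) := by
  simp only [transverseBranch, shiftedPolynomial, map_sum, Polynomial.aeval_monomial,
    algebraMap_eq, Finset.mul_sum]
  congr! 2
  ring

theorem tangentBranch_shiftedPolynomial (n : ℕ) (c : ℕ → R) :
    tangentBranch (shiftedPolynomial n c) =
      X 1 + ∑ k ∈ Finset.Icc 1 n, C (c k) * X 0 ^ (k + 1) := by
  simp only [tangentBranch, shiftedPolynomial, map_sum, Polynomial.aeval_monomial,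
    algebraMap_eq, Finset.mul_sum]
  congr! 2 with k hk
  rw [show k + 1 = 2 + (k - 1) by have := (Finset.mem_Icc.1 hk).1; omega]
  ring

/-- The normal form `N_p` over an arbitrary commutative ring of coefficients. -/
noncomputable def normalForm (M N : ℕ) (a b : ℕ → ℕ → R) : MvPolynomial (Fin 2) R :=
  X 0 * X 1 * (X 1 + X 0 ^ 2) *
    (∏ i ∈ Finset.Icc 1 (N - 1),
      (X 1 + ∑ k ∈ Finset.Icc 1 i, C (a k i) * X 0 * X 1 ^ (k - 1))) *
    (∏ i ∈ Finset.Icc 1 (M - 2),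
      (X 1 + ∑ k ∈ Finset.Icc 1 (N - 1 + 2 * i), C (b k i) * X 0 ^ (k + 1)))

theorem normalForm_eq_mul_prod_branches (M N : ℕ) (a b : ℕ → ℕ → R) :
    normalForm M N a b = X 0 * X 1 * tangentBranch 1 *
      ((∏ i ∈ Finset.Icc 1 (N - 1), transverseBranch (shiftedPolynomial i (a · i))) *
        ∏ i ∈ Finset.Icc 1 (M - 2),
          tangentBranch (shiftedPolynomial (N - 1 + 2 * i) (b · i))) := by
  simp only [normalForm, transverseBranch_shiftedPolynomial, tangentBranch_shiftedPolynomial,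
    tangentBranch_one, mul_assoc]

theorem stmt_5_general [IsDomain R] (M N : ℕ) (a b a' b' : ℕ → ℕ → R)
    (ha : Set.InjOn (a 1) (Finset.Icc 1 (N - 1))) (hb : Set.InjOn (b 1) (Finset.Icc 1 (M - 2)))
    (hEq : normalForm M N a b = normalForm M N a' b')
    (ha1 : ∀ i ∈ Finset.Icc 1 (N - 1), a 1 i = a' 1 i)
    (hb1 : ∀ i ∈ Finset.Icc 1 (M - 2), b 1 i = b' 1 i) :
    (∀ i ∈ Finset.Icc 1 (N - 1), ∀ k ∈ Finset.Icc 1 i, a k i = a' k i) ∧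
    (∀ i ∈ Finset.Icc 1 (M - 2), ∀ k ∈ Finset.Icc 1 (N - 1 + 2 * i), b k i = b' k i) := by
  have hcA (c : ℕ → ℕ → R) : ∀ i ∈ Finset.Icc 1 (N - 1),
      (shiftedPolynomial i (c · i)).coeff 0 = c 1 i := fun i hi ↦
    coeff_zero_shiftedPolynomial (Finset.mem_Icc.1 hi).1 _
  have hcB (c : ℕ → ℕ → R) : ∀ i ∈ Finset.Icc 1 (M - 2),
      (shiftedPolynomial (N - 1 + 2 * i) (c · i)).coeff 0 = c 1 i := fun i hi ↦
    coeff_zero_shiftedPolynomial (by have := (Finset.mem_Icc.1 hi).1; omega) _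
  have hcommon : (X 0 * X 1 * tangentBranch 1 : MvPolynomial (Fin 2) R) ≠ 0 :=
    mul_ne_zero (mul_ne_zero (X_ne_zero 0) (X_ne_zero 1)) (tangentBranch_ne_zero 1)
  rw [normalForm_eq_mul_prod_branches, normalForm_eq_mul_prod_branches] at hEq
  obtain ⟨hA, hB⟩ := eq_of_prod_transverseBranch_mul_prod_tangentBranch_eq
    (ha.congr fun i hi ↦ (hcA a i hi).symm) (hb.congr fun i hi ↦ (hcB b i hi).symm)
    (fun i hi ↦ by rw [hcA a i hi, hcA a' i hi, ha1 i hi])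
    (fun i hi ↦ by rw [hcB b i hi, hcB b' i hi, hb1 i hi])
    (mul_left_cancel₀ hcommon hEq)
  refine ⟨fun i hi k hk ↦ ?_, fun i hi k hk ↦ ?_⟩
  · rw [← coeff_shiftedPolynomial hk (a · i), hA i hi, coeff_shiftedPolynomial hk]
  · rw [← coeff_shiftedPolynomial hk (b · i), hB i hi, coeff_shiftedPolynomial hk]

end NormalForm

/-- If `N_p = N_q` as polynomials and the first-level coefficients of `p, q ∈ 𝒫` agree,
then all coefficients agree. -/
theorem stmt_5 (M N : ℕ) (hM : 2 ≤ M) (hN : 2 ≤ N) (a b a' b' : ℕ → ℕ → ℂ)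
    (hp : memP M N a b) (hq : memP M N a' b')
    (hEq : Npoly M N a b = Npoly M N a' b')
    (ha1 : ∀ i ∈ Finset.Icc 1 (N - 1), a 1 i = a' 1 i)
    (hb1 : ∀ i ∈ Finset.Icc 1 (M - 2), b 1 i = b' 1 i) :
    (∀ i ∈ Finset.Icc 1 (N - 1), ∀ k ∈ Finset.Icc 1 i, a k i = a' k i) ∧
    (∀ i ∈ Finset.Icc 1 (M - 2), ∀ k ∈ Finset.Icc 1 (N - 1 + 2 * i), b k i = b' k i) :=
  stmt_5_general M N a b a' b' (fun i hi j hj ↦ not_imp_not.1 (hp.2.2.1 i hi j hj))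
    (fun i hi j hj ↦ not_imp_not.1 (hp.2.2.2 i hi j hj)) hEq ha1 hb1
end

section
/- For every parameter p, substituting x = x₁ and y = x₁y₁ (the first blow-up E₁(x₁,y₁) = (x₁, x₁y₁)) yields the identity of polynomials N_p(x₁, x₁y₁) = x₁^{M+N−1}·Ñ_p(x₁,y₁), where Ñ_p(x₁,y₁) = x₁·y₁·(y₁+x₁)·∏_{i=1}^{N−1}(y₁ + Σ_{k=1}^{i} a_{k,i}·x₁^{k−1}·y₁^{k−1})·∏_{i=1}^{M−2}(y₁ + Σ_{k=1}^{N−1+2i} b_{k,i}·x₁^{k}). -/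
open MvPolynomial

/-- The strict transform `Ñ_p` of the normal form after the first blow-up
`E₁(x₁,y₁) = (x₁, x₁y₁)`. -/
noncomputable def Ntilde (M N : ℕ) (a b : ℕ → ℕ → ℂ) : MvPolynomial (Fin 2) ℂ :=
  X 0 * X 1 * (X 1 + X 0) *
    (∏ i ∈ Finset.Icc 1 (N - 1),
      (X 1 + ∑ k ∈ Finset.Icc 1 i, C (a k i) * X 0 ^ (k - 1) * X 1 ^ (k - 1))) *
    (∏ i ∈ Finset.Icc 1 (M - 2),
      (X 1 + ∑ k ∈ Finset.Icc 1 (N - 1 + 2 * i), C (b k i) * X 0 ^ k))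

/-!
Each of the branches `y = 0`, `y + x² = 0`, `y + ∑ a_{k,i} x y^{k-1} = 0` and
`y + ∑ b_{k,i} x^{k+1} = 0` is smooth at the origin, so its equation pulls back to `x₁` times its
strict transform. There are `2 + (N - 1) + (M - 2) = M + N - 1` of them. The remaining factor `x`
pulls back to `x₁`, the equation of the exceptional divisor, and is kept in `Ñ_p`.
-/

section BlowUp

variable {R ι : Type*} [CommSemiring R]

/-- The pull-back `f(x, y) ↦ f(x₁, x₁y₁)` of polynomials along the blow-up of the origin, in the
chart `(x₁, y₁) ↦ (x₁, x₁y₁)`. The variables `X 0`, `X 1` stand for `x`, `y` in the source and for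
`x₁`, `y₁` in the target. -/
noncomputable def blowUp : MvPolynomial (Fin 2) R →ₐ[R] MvPolynomial (Fin 2) R :=
  aeval ![X 0, X 0 * X 1]

@[simp]
theorem blowUp_X_zero : blowUp (X 0 : MvPolynomial (Fin 2) R) = X 0 :=
  aeval_X _ _

@[simp]
theorem blowUp_X_one : blowUp (X 1 : MvPolynomial (Fin 2) R) = X 0 * X 1 :=
  aeval_X _ _

theorem blowUp_prod_eq_pow_card_mul {s : Finset ι} {f g : ι → MvPolynomial (Fin 2) R}
    (hfg : ∀ i ∈ s, blowUp (f i) = X 0 * g i) :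
    blowUp (∏ i ∈ s, f i) = X 0 ^ s.card * ∏ i ∈ s, g i := by
  rw [map_prod, Finset.prod_congr rfl hfg, Finset.prod_mul_distrib, Finset.prod_const]

theorem blowUp_X_one_add_sum {s : Finset ι} {f g : ι → MvPolynomial (Fin 2) R}
    (hfg : ∀ i ∈ s, blowUp (f i) = X 0 * g i) :
    blowUp (X 1 + ∑ i ∈ s, f i) = X 0 * (X 1 + ∑ i ∈ s, g i) := by
  rw [map_add, blowUp_X_one, map_sum, Finset.sum_congr rfl hfg, ← Finset.mul_sum, mul_add]

theorem blowUp_X_one_add_sum_X_zero_mul_X_one_pow (s : Finset ι) (c : ι → R) (e : ι → ℕ) :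
    blowUp (X 1 + ∑ i ∈ s, C (c i) * X 0 * X 1 ^ e i) =
      X 0 * (X 1 + ∑ i ∈ s, C (c i) * X 0 ^ e i * X 1 ^ e i) :=
  blowUp_X_one_add_sum fun i _ => by
    simp only [map_mul, map_pow, algHom_C, algebraMap_eq, blowUp_X_zero, blowUp_X_one]
    ring

theorem blowUp_X_one_add_sum_X_zero_pow_succ (s : Finset ι) (c : ι → R) (e : ι → ℕ) :
    blowUp (X 1 + ∑ i ∈ s, C (c i) * X 0 ^ (e i + 1)) =
      X 0 * (X 1 + ∑ i ∈ s, C (c i) * X 0 ^ e i) :=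
  blowUp_X_one_add_sum fun i _ => by
    simp only [map_mul, map_pow, algHom_C, algebraMap_eq, blowUp_X_zero]
    ring

theorem blowUp_X_zero_mul_X_one_mul_X_one_add_X_zero_sq :
    blowUp (X 0 * X 1 * (X 1 + X 0 ^ 2) : MvPolynomial (Fin 2) R) =
      X 0 ^ 2 * (X 0 * X 1 * (X 1 + X 0)) := by
  simp only [map_mul, map_add, map_pow, blowUp_X_zero, blowUp_X_one]
  ring

end BlowUp

/-- Substituting `x = x₁`, `y = x₁y₁` (the first blow-up) yields
`N_p(x₁, x₁y₁) = x₁^{M+N-1} · Ñ_p(x₁,y₁)`. -/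
theorem stmt_8 (M N : ℕ) (hM : 2 ≤ M) (hN : 2 ≤ N) (a b : ℕ → ℕ → ℂ) :
    aeval ![(X 0 : MvPolynomial (Fin 2) ℂ), X 0 * X 1] (Npoly M N a b) =
      X 0 ^ (M + N - 1) * Ntilde M N a b := by
  have branch_count : M + N - 1 = 2 + (N - 1) + (M - 2) := by omega
  have blowUp_a_branches := blowUp_prod_eq_pow_card_mul (s := Finset.Icc 1 (N - 1)) fun i _ =>
    blowUp_X_one_add_sum_X_zero_mul_X_one_pow (Finset.Icc 1 i) (fun k => a k i) (fun k => k - 1)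
  have blowUp_b_branches := blowUp_prod_eq_pow_card_mul (s := Finset.Icc 1 (M - 2)) fun i _ =>
    blowUp_X_one_add_sum_X_zero_pow_succ (Finset.Icc 1 (N - 1 + 2 * i)) (fun k => b k i)
      (fun k => k)
  rw [Nat.card_Icc, Nat.add_sub_cancel] at blowUp_a_branches blowUp_b_branches
  change blowUp (Npoly M N a b) = _
  rw [Npoly, map_mul, map_mul, blowUp_X_zero_mul_X_one_mul_X_one_add_X_zero_sq,
    blowUp_a_branches, blowUp_b_branches, Ntilde, branch_count]
  ring
end

section
/- Let l ≥ 1 and let p, q be parameters (with entries a_{k,i}, b_{k,i} and a′_{k,i}, b′_{k,i} respectively) such that a_{k,i} = a′_{k,i} for all i and all k with 2k−2 ≤ l, and b_{k,i} = b′_{k,i} for all i and all k ≤ l. Define the blown-up polynomials Ñ_p(x₁,y₁) = x₁·y₁·(y₁+x₁)·∏_{i=1}^{N−1}(y₁ + Σ_{k=1}^{i} a_{k,i}·x₁^{k−1}·y₁^{k−1})·∏_{i=1}^{M−2}(y₁ + Σ_{k=1}^{N−1+2i} b_{k,i}·x₁^{k}) and similarly Ñ_q. Then the homogeneous component of total degree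 M+1+l of Ñ_p − Ñ_q equals x₁^{l+2}·y₁·(y₁+x₁)·(∏_{j=1}^{N−1} a_{1,j})·Σ_i (b_{l+1,i} − b′_{l+1,i})·∏_{j=1, j≠i}^{M−2}(y₁ + b_{1,j}·x₁), where the sum runs over those i with 1 ≤ i ≤ M−2 and l+1 ≤ N−1+2i. -/
open MvPolynomial

/-!
Work with the powers of `𝔪 = (x₁, y₁)`. On `𝔪 ^ m` and `𝔪 ^ n` the components of degrees `m` and `n`
are multiplicative, so replacing the factors of a product one at a time computes the lowest
component of a difference of two products from the lowest components of the factors. In `Ñ_p - Ñ_q`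
the `a`-factors of `p` and `q` agree modulo `𝔪 ^ (l + 1)`, so they contribute to the component of
degree `M + 1 + l` only through their constant terms `a_{1,i}`; each `b`-factor has lowest
component `y₁ + b_{1,i} x₁`, and its two versions first differ in degree `l + 1 ≥ 2`.
-/

theorem mul_sub_mul_eq_add {R : Type*} [NonUnitalNonAssocRing R] (a b c d : R) :
    a * c - b * d = a * (c - d) + (a - b) * d := by
  rw [mul_sub, sub_mul, sub_add_sub_cancel]

section IdealPowers

variable {R ι : Type*}

section CommSemiring

variable [CommSemiring R] {I : Ideal R}

theorem mul_mem_pow_add {m n : ℕ} {x y : R} (hx : x ∈ I ^ m) (hy : y ∈ I ^ n) :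
    x * y ∈ I ^ (m + n) :=
  pow_add I m n ▸ Ideal.mul_mem_mul hx hy

theorem prod_mem_pow_sum {s : Finset ι} {d : ι → ℕ} {f : ι → R} (hf : ∀ i ∈ s, f i ∈ I ^ d i) :
    ∏ i ∈ s, f i ∈ I ^ ∑ i ∈ s, d i := by
  rw [← Finset.prod_pow_eq_pow_sum]
  exact Ideal.prod_mem_prod hf

end CommSemiring

variable [CommRing R] {I : Ideal R}

theorem mem_pow_of_sub_mem_pow_add {m l : ℕ} {x y : R} (hx : x ∈ I ^ m)
    (hxy : x - y ∈ I ^ (m + l)) : y ∈ I ^ m := by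
  rw [← sub_sub_cancel x y]
  exact sub_mem hx (Ideal.pow_le_pow_right (Nat.le_add_right m l) hxy)

theorem prod_sub_prod_mem_pow_sum_add {s : Finset ι} {d : ι → ℕ} {l : ℕ} {f g : ι → R}
    (hf : ∀ i ∈ s, f i ∈ I ^ d i) (hfg : ∀ i ∈ s, f i - g i ∈ I ^ (d i + l)) :
    ∏ i ∈ s, f i - ∏ i ∈ s, g i ∈ I ^ (∑ i ∈ s, d i + l) := by
  classical
  induction s using Finset.induction_on with
  | empty => simp
  | insert i s his ih =>
    rw [Finset.forall_mem_insert] at hf hfg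
    have hg : ∀ j ∈ s, g j ∈ I ^ d j := fun j hj =>
      mem_pow_of_sub_mem_pow_add (hf.2 j hj) (hfg.2 j hj)
    rw [Finset.prod_insert his, Finset.prod_insert his, Finset.sum_insert his,
      mul_sub_mul_eq_add]
    refine add_mem ?_ ?_
    · rw [add_assoc]
      exact mul_mem_pow_add hf.1 (ih hf.2 hfg.2)
    · rw [add_right_comm]
      exact mul_mem_pow_add hfg.1 (prod_mem_pow_sum hg)

end IdealPowers

section LowestComponent

variable {σ R ι : Type*}

section CommSemiring

variable [CommSemiring R]

theorem homogeneousComponent_eq_zero_of_mem_pow_idealOfVars {d n : ℕ} {p : MvPolynomial σ R}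
    (hp : p ∈ idealOfVars σ R ^ n) (hdn : d < n) : homogeneousComponent d p = 0 :=
  homogeneousComponent_eq_zero' d p fun x hx =>
    (hdn.trans_le ((mem_pow_idealOfVars_iff n p).mp hp x hx)).ne'

theorem mem_pow_idealOfVars_of_isHomogeneous {n : ℕ} {p : MvPolynomial σ R}
    (hp : p.IsHomogeneous n) : p ∈ idealOfVars σ R ^ n :=
  (mem_pow_idealOfVars_iff' n p).mpr fun _ hx => hp.coeff_eq_zero hx.ne

theorem homogeneousComponent_mul_of_mem_pow_idealOfVars {m n : ℕ} {p q : MvPolynomial σ R}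
    (hp : p ∈ idealOfVars σ R ^ m) (hq : q ∈ idealOfVars σ R ^ n) :
    homogeneousComponent (m + n) (p * q) =
      homogeneousComponent m p * homogeneousComponent n q := by
  classical
  have hom := (homogeneousComponent_isHomogeneous m p).mul (homogeneousComponent_isHomogeneous n q)
  ext d
  rw [coeff_homogeneousComponent]
  split_ifs with hd
  · rw [coeff_mul, coeff_mul]
    refine Finset.sum_congr rfl fun x hx => ?_
    have hdeg : x.1.degree + x.2.degree = m + n := by
      rw [← map_add, Finset.HasAntidiagonal.mem_antidiagonal.mp hx, hd]
    rw [coeff_homogeneousComponent, coeff_homogeneousComponent]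
    rcases lt_trichotomy x.1.degree m with hlt | heq | hgt
    · rw [(mem_pow_idealOfVars_iff' m p).mp hp x.1 hlt, zero_mul, ite_self, zero_mul]
    · rw [if_pos heq, if_pos (by omega)]
    · rw [(mem_pow_idealOfVars_iff' n q).mp hq x.2 (by omega), mul_zero, ite_self, mul_zero]
  · exact (hom.coeff_eq_zero hd).symm

theorem homogeneousComponent_prod_of_mem_pow_idealOfVars {s : Finset ι} {d : ι → ℕ}
    {f : ι → MvPolynomial σ R} (hf : ∀ i ∈ s, f i ∈ idealOfVars σ R ^ d i) :
    homogeneousComponent (∑ i ∈ s, d i) (∏ i ∈ s, f i) =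
      ∏ i ∈ s, homogeneousComponent (d i) (f i) := by
  classical
  induction s using Finset.induction_on with
  | empty => simp
  | insert i s his ih =>
    rw [Finset.forall_mem_insert] at hf
    rw [Finset.sum_insert his, Finset.prod_insert his, Finset.prod_insert his,
      homogeneousComponent_mul_of_mem_pow_idealOfVars hf.1 (prod_mem_pow_sum hf.2),
      ih hf.2]

theorem X_mem_idealOfVars (i : σ) : (X i : MvPolynomial σ R) ∈ idealOfVars σ R :=
  Ideal.subset_span (Set.mem_range_self i)

theorem X_pow_mem_pow_idealOfVars (i : σ) {m n : ℕ} (hmn : m ≤ n) :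
    (X i ^ n : MvPolynomial σ R) ∈ idealOfVars σ R ^ m :=
  Ideal.pow_le_pow_right hmn (Ideal.pow_mem_pow (X_mem_idealOfVars i) n)

theorem homogeneousComponent_sum_C_mul_X_pow (i : σ) (s : Finset ℕ) (c : ℕ → R) (d : ℕ) :
    homogeneousComponent d (∑ k ∈ s, C (c k) * X i ^ k) =
      if d ∈ s then C (c d) * X i ^ d else 0 := by
  simp only [map_sum, homogeneousComponent_C_mul,
    homogeneousComponent_of_mem (isHomogeneous_X_pow i _), mul_ite, mul_zero, Finset.sum_ite_eq]

end CommSemiring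

variable [CommRing R] {s : Finset ι} {d : ι → ℕ} {l : ℕ} {f g : ι → MvPolynomial σ R}

theorem homogeneousComponent_eq_of_sub_mem_pow_idealOfVars {k n : ℕ} {p q : MvPolynomial σ R}
    (hpq : p - q ∈ idealOfVars σ R ^ n) (hkn : k < n) :
    homogeneousComponent k p = homogeneousComponent k q := by
  rw [← sub_eq_zero, ← map_sub]
  exact homogeneousComponent_eq_zero_of_mem_pow_idealOfVars hpq hkn

theorem homogeneousComponent_prod_sub_prod [DecidableEq ι] (hl : 0 < l)
    (hf : ∀ i ∈ s, f i ∈ idealOfVars σ R ^ d i)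
    (hfg : ∀ i ∈ s, f i - g i ∈ idealOfVars σ R ^ (d i + l)) :
    homogeneousComponent (∑ i ∈ s, d i + l) (∏ i ∈ s, f i - ∏ i ∈ s, g i) =
      ∑ i ∈ s, homogeneousComponent (d i + l) (f i - g i) *
        ∏ j ∈ s.erase i, homogeneousComponent (d j) (f j) := by
  induction s using Finset.induction_on with
  | empty => simp
  | insert i s his ih =>
    rw [Finset.forall_mem_insert] at hf hfg
    have hg : ∀ j ∈ s, g j ∈ idealOfVars σ R ^ d j := fun j hj =>
      mem_pow_of_sub_mem_pow_add (hf.2 j hj) (hfg.2 j hj)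
    have lowest_eq : ∀ j ∈ s, homogeneousComponent (d j) (f j) = homogeneousComponent (d j) (g j) :=
      fun j hj => homogeneousComponent_eq_of_sub_mem_pow_idealOfVars (hfg.2 j hj) (by omega)
    have tail_diff : homogeneousComponent (d i + ∑ j ∈ s, d j + l)
        (f i * (∏ j ∈ s, f j - ∏ j ∈ s, g j)) =
        ∑ j ∈ s, homogeneousComponent (d j + l) (f j - g j) *
          ∏ k ∈ (insert i s).erase j, homogeneousComponent (d k) (f k) := by
      rw [add_assoc, homogeneousComponent_mul_of_mem_pow_idealOfVars hf.1
        (prod_sub_prod_mem_pow_sum_add hf.2 hfg.2), ih hf.2 hfg.2, Finset.mul_sum]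
      refine Finset.sum_congr rfl fun j hj => ?_
      rw [Finset.erase_insert_of_ne (ne_of_mem_of_not_mem hj his).symm,
        Finset.prod_insert (fun hi => his (Finset.mem_of_mem_erase hi)), mul_left_comm]
    have head_diff : homogeneousComponent (d i + ∑ j ∈ s, d j + l)
        ((f i - g i) * ∏ j ∈ s, g j) =
        homogeneousComponent (d i + l) (f i - g i) *
          ∏ j ∈ s, homogeneousComponent (d j) (f j) := by
      rw [add_right_comm, homogeneousComponent_mul_of_mem_pow_idealOfVars hfg.1
        (prod_mem_pow_sum hg), homogeneousComponent_prod_of_mem_pow_idealOfVars hg,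
        ← Finset.prod_congr rfl lowest_eq]
    rw [Finset.prod_insert his, Finset.prod_insert his, Finset.sum_insert his,
      mul_sub_mul_eq_add, map_add, tail_diff, head_diff, Finset.sum_insert his,
      Finset.erase_insert his, add_comm]

theorem homogeneousComponent_mul_mul_sub_mul_mul {e k : ℕ} {P A A' B B' : MvPolynomial σ R}
    (hP : P.IsHomogeneous e) (hA : A - A' ∈ idealOfVars σ R ^ (l + 1))
    (hB' : B' ∈ idealOfVars σ R ^ k) (hB : B - B' ∈ idealOfVars σ R ^ (k + l)) :
    homogeneousComponent (e + (k + l)) (P * A * B - P * A' * B') =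
      P * C (constantCoeff A) * homogeneousComponent (k + l) (B - B') := by
  have hPA : P * A ∈ idealOfVars σ R ^ e :=
    Ideal.mul_mem_right _ _ (mem_pow_idealOfVars_of_isHomogeneous hP)
  have A_part : homogeneousComponent (e + (k + l)) ((P * A - P * A') * B') = 0 := by
    rw [← mul_sub]
    exact homogeneousComponent_eq_zero_of_mem_pow_idealOfVars (mul_mem_pow_add
      (mul_mem_pow_add (mem_pow_idealOfVars_of_isHomogeneous hP) hA) hB') (by omega)
  have PA_lowest : homogeneousComponent e (P * A) = P * C (constantCoeff A) := by
    have := homogeneousComponent_mul_of_mem_pow_idealOfVars (n := 0)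
      (mem_pow_idealOfVars_of_isHomogeneous hP) (show A ∈ idealOfVars σ R ^ 0 by simp)
    rwa [add_zero, homogeneousComponent_eq_self hP, homogeneousComponent_zero,
      ← constantCoeff_eq] at this
  rw [mul_sub_mul_eq_add, map_add, A_part, add_zero,
    homogeneousComponent_mul_of_mem_pow_idealOfVars hPA hB, PA_lowest]

end LowestComponent

section Factors

variable {R : Type*}

section CommSemiring

variable [CommSemiring R]

/-- The factor `y₁ + ∑_{k=1}^{n} c_k x₁^{k-1} y₁^{k-1}` of a blown-up polynomial. The variables
`x₁` and `y₁` are `X 0` and `X 1`. -/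
noncomputable def aFactor (n : ℕ) (c : ℕ → R) : MvPolynomial (Fin 2) R :=
  X 1 + ∑ k ∈ Finset.Icc 1 n, C (c k) * X 0 ^ (k - 1) * X 1 ^ (k - 1)

/-- The factor `y₁ + ∑_{k=1}^{n} c_k x₁^k` of a blown-up polynomial. The variables `x₁` and `y₁`
are `X 0` and `X 1`. -/
noncomputable def bFactor (n : ℕ) (c : ℕ → R) : MvPolynomial (Fin 2) R :=
  X 1 + ∑ k ∈ Finset.Icc 1 n, C (c k) * X 0 ^ k

theorem constantCoeff_aFactor {n : ℕ} (hn : 1 ≤ n) (c : ℕ → R) :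
    constantCoeff (aFactor n c) = c 1 := by
  have higher : ∀ k ∈ Finset.Icc 1 n, k ≠ 1 → c k * 0 ^ (k - 1) * 0 ^ (k - 1) = 0 := by
    intro k hk hk1
    rw [zero_pow (by grind), mul_zero]
  simp only [aFactor, map_add, map_sum, map_mul, map_pow, constantCoeff_C, constantCoeff_X,
    zero_add]
  rw [Finset.sum_eq_single_of_mem 1 (Finset.mem_Icc.mpr ⟨le_rfl, hn⟩) higher]
  simp

theorem bFactor_mem (n : ℕ) (c : ℕ → R) : bFactor n c ∈ idealOfVars (Fin 2) R ^ 1 := by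
  rw [pow_one]
  refine add_mem (X_mem_idealOfVars 1) (sum_mem fun k hk => Ideal.mul_mem_left _ _ ?_)
  exact Ideal.pow_mem_of_mem _ (X_mem_idealOfVars 0) k (Finset.mem_Icc.mp hk).1

theorem homogeneousComponent_one_bFactor {n : ℕ} (hn : 1 ≤ n) (c : ℕ → R) :
    homogeneousComponent 1 (bFactor n c) = X 1 + C (c 1) * X 0 := by
  rw [bFactor, map_add, homogeneousComponent_eq_self (isHomogeneous_X R 1),
    homogeneousComponent_sum_C_mul_X_pow, if_pos (Finset.mem_Icc.mpr ⟨le_rfl, hn⟩), pow_one]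

end CommSemiring

variable [CommRing R] {n l : ℕ} {c c' : ℕ → R}

theorem aFactor_sub_aFactor_mem (hc : ∀ k ∈ Finset.Icc 1 n, 2 * k - 2 ≤ l → c k = c' k) :
    aFactor n c - aFactor n c' ∈ idealOfVars (Fin 2) R ^ (l + 1) := by
  rw [aFactor, aFactor, add_sub_add_left_eq_sub, ← Finset.sum_sub_distrib]
  refine sum_mem fun k hk => ?_
  rcases le_or_gt (2 * k - 2) l with hkl | hlk
  · simp only [hc k hk hkl, sub_self, zero_mem]
  · have hmon : (X 0 ^ (k - 1) * X 1 ^ (k - 1) : MvPolynomial (Fin 2) R) ∈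
        idealOfVars (Fin 2) R ^ (l + 1) :=
      Ideal.pow_le_pow_right (show l + 1 ≤ (k - 1) + (k - 1) by omega) <|
        mul_mem_pow_add (X_pow_mem_pow_idealOfVars 0 le_rfl) (X_pow_mem_pow_idealOfVars 1 le_rfl)
    rw [mul_assoc, mul_assoc, ← sub_mul]
    exact Ideal.mul_mem_left _ _ hmon

theorem bFactor_sub_bFactor (n : ℕ) (c c' : ℕ → R) :
    bFactor n c - bFactor n c' = ∑ k ∈ Finset.Icc 1 n, C (c k - c' k) * X 0 ^ k := by
  simp only [bFactor, add_sub_add_left_eq_sub, ← Finset.sum_sub_distrib, C_sub, sub_mul]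

theorem bFactor_sub_bFactor_mem (hc : ∀ k ∈ Finset.Icc 1 n, k ≤ l → c k = c' k) :
    bFactor n c - bFactor n c' ∈ idealOfVars (Fin 2) R ^ (1 + l) := by
  rw [bFactor_sub_bFactor, add_comm]
  refine sum_mem fun k hk => ?_
  rcases le_or_gt k l with hkl | hlk
  · simp only [hc k hk hkl, sub_self, map_zero, zero_mul, zero_mem]
  · exact Ideal.mul_mem_left _ _ (X_pow_mem_pow_idealOfVars 0 hlk)

theorem homogeneousComponent_bFactor_sub_bFactor (n d : ℕ) (c c' : ℕ → R) :
    homogeneousComponent (1 + d) (bFactor n c - bFactor n c') =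
      if d + 1 ≤ n then C (c (d + 1) - c' (d + 1)) * X 0 ^ (d + 1) else 0 := by
  simp only [add_comm 1 d, bFactor_sub_bFactor, homogeneousComponent_sum_C_mul_X_pow,
    Finset.mem_Icc, Nat.le_add_left, true_and]

end Factors

section Products

variable {R ι κ : Type*}

theorem constantCoeff_prod_aFactor [CommSemiring R] {s : Finset ι} {m : ι → ℕ}
    (hm : ∀ i ∈ s, 1 ≤ m i) (a : ℕ → ι → R) :
    constantCoeff (∏ i ∈ s, aFactor (m i) (a · i)) = ∏ i ∈ s, a 1 i := by
  rw [map_prod]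
  exact Finset.prod_congr rfl fun i hi => constantCoeff_aFactor (hm i hi) _

variable [CommRing R]

theorem prod_aFactor_sub_prod_aFactor_mem {s : Finset ι} {m : ι → ℕ} {l : ℕ} {a a' : ℕ → ι → R}
    (ha : ∀ i ∈ s, ∀ k ∈ Finset.Icc 1 (m i), 2 * k - 2 ≤ l → a k i = a' k i) :
    ∏ i ∈ s, aFactor (m i) (a · i) - ∏ i ∈ s, aFactor (m i) (a' · i) ∈
      idealOfVars (Fin 2) R ^ (l + 1) := by
  simpa using prod_sub_prod_mem_pow_sum_add (d := fun _ => 0) (by simp)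
    fun i hi => (zero_add (l + 1)).symm ▸ aFactor_sub_aFactor_mem (ha i hi)

theorem prod_bFactor_mem (t : Finset κ) (n : κ → ℕ) (b : ℕ → κ → R) :
    ∏ i ∈ t, bFactor (n i) (b · i) ∈ idealOfVars (Fin 2) R ^ t.card := by
  simpa using prod_mem_pow_sum (s := t) (d := fun _ => 1)
    fun i _ => bFactor_mem (n i) (b · i)

theorem prod_bFactor_sub_prod_bFactor_mem {t : Finset κ} {n : κ → ℕ} {l : ℕ} {b b' : ℕ → κ → R}
    (hb : ∀ i ∈ t, ∀ k ∈ Finset.Icc 1 (n i), k ≤ l → b k i = b' k i) :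
    ∏ i ∈ t, bFactor (n i) (b · i) - ∏ i ∈ t, bFactor (n i) (b' · i) ∈
      idealOfVars (Fin 2) R ^ (t.card + l) := by
  rw [Finset.card_eq_sum_ones]
  exact prod_sub_prod_mem_pow_sum_add (fun i _ => bFactor_mem (n i) (b · i))
    fun i hi => bFactor_sub_bFactor_mem (hb i hi)

theorem homogeneousComponent_prod_bFactor_sub_prod_bFactor [DecidableEq κ] {t : Finset κ}
    {n : κ → ℕ} (hn : ∀ i ∈ t, 1 ≤ n i) {l : ℕ} (hl : 1 ≤ l) {b b' : ℕ → κ → R}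
    (hb : ∀ i ∈ t, ∀ k ∈ Finset.Icc 1 (n i), k ≤ l → b k i = b' k i) :
    homogeneousComponent (t.card + l)
        (∏ i ∈ t, bFactor (n i) (b · i) - ∏ i ∈ t, bFactor (n i) (b' · i)) =
      X 0 ^ (l + 1) * ∑ i ∈ t with l + 1 ≤ n i, C (b (l + 1) i - b' (l + 1) i) *
        ∏ j ∈ t.erase i, (X 1 + C (b 1 j) * X 0) := by
  rw [Finset.card_eq_sum_ones, homogeneousComponent_prod_sub_prod hl
    (fun i _ => bFactor_mem (n i) (b · i))
    (fun i hi => bFactor_sub_bFactor_mem (hb i hi)), Finset.sum_filter, Finset.mul_sum]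
  refine Finset.sum_congr rfl fun i _ => ?_
  rw [homogeneousComponent_bFactor_sub_bFactor, Finset.prod_congr rfl fun j hj =>
    homogeneousComponent_one_bFactor (hn j (Finset.mem_of_mem_erase hj)) (b · j)]
  split_ifs <;> ring

/-- The blown-up polynomial `Ñ_p` over an arbitrary coefficient ring, with its two families of
factors indexed by arbitrary finite sets `s` and `t` and truncated at arbitrary lengths `m i` and
`n i`. The variables `x₁` and `y₁` are `X 0` and `X 1`. -/
noncomputable def blownUpProduct (s : Finset ι) (t : Finset κ) (m : ι → ℕ) (n : κ → ℕ)
    (a : ℕ → ι → R) (b : ℕ → κ → R) : MvPolynomial (Fin 2) R :=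
  X 0 * X 1 * (X 1 + X 0) * (∏ i ∈ s, aFactor (m i) (a · i)) * ∏ i ∈ t, bFactor (n i) (b · i)

theorem stmt_13_general [DecidableEq κ] {s : Finset ι} {t : Finset κ} {m : ι → ℕ} {n : κ → ℕ}
    (hm : ∀ i ∈ s, 1 ≤ m i) (hn : ∀ i ∈ t, 1 ≤ n i) {l : ℕ} (hl : 1 ≤ l)
    {a a' : ℕ → ι → R} {b b' : ℕ → κ → R}
    (ha : ∀ i ∈ s, ∀ k ∈ Finset.Icc 1 (m i), 2 * k - 2 ≤ l → a k i = a' k i)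
    (hb : ∀ i ∈ t, ∀ k ∈ Finset.Icc 1 (n i), k ≤ l → b k i = b' k i) :
    homogeneousComponent (t.card + 3 + l)
        (blownUpProduct s t m n a b - blownUpProduct s t m n a' b') =
      X 0 ^ (l + 2) * X 1 * (X 1 + X 0) * C (∏ j ∈ s, a 1 j) *
        ∑ i ∈ t with l + 1 ≤ n i, C (b (l + 1) i - b' (l + 1) i) *
          ∏ j ∈ t.erase i, (X 1 + C (b 1 j) * X 0) := by
  have prefactor_hom : (X 0 * X 1 * (X 1 + X 0) : MvPolynomial (Fin 2) R).IsHomogeneous 3 :=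
    ((isHomogeneous_X R 0).mul (isHomogeneous_X R 1)).mul
      ((isHomogeneous_X R 1).add (isHomogeneous_X R 0))
  rw [blownUpProduct, blownUpProduct, add_comm t.card, add_assoc,
    homogeneousComponent_mul_mul_sub_mul_mul prefactor_hom (prod_aFactor_sub_prod_aFactor_mem ha)
      (prod_bFactor_mem t n b') (prod_bFactor_sub_prod_bFactor_mem hb),
    constantCoeff_prod_aFactor hm, homogeneousComponent_prod_bFactor_sub_prod_bFactor hn hl hb]
  ring

end Products

/-- If `a_{k,i} = a'_{k,i}` whenever `2k-2 ≤ l` and `b_{k,i} = b'_{k,i}` whenever `k ≤ l`,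
then the homogeneous component of total degree `M+1+l` of `Ñ_p - Ñ_q` is
`x₁^{l+2}·y₁·(y₁+x₁)·(∏ a_{1,j})·Σ_i (b_{l+1,i} - b'_{l+1,i})·∏_{j≠i} (y₁ + b_{1,j} x₁)`,
the sum running over `1 ≤ i ≤ M-2` with `l+1 ≤ N-1+2i`. -/
theorem stmt_13 (M N : ℕ) (hM : 2 ≤ M) (hN : 2 ≤ N) (l : ℕ) (hl : 1 ≤ l)
    (a b a' b' : ℕ → ℕ → ℂ)
    (ha : ∀ i ∈ Finset.Icc 1 (N - 1), ∀ k ∈ Finset.Icc 1 i, 2 * k - 2 ≤ l → a k i = a' k i)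
    (hb : ∀ i ∈ Finset.Icc 1 (M - 2), ∀ k ∈ Finset.Icc 1 (N - 1 + 2 * i), k ≤ l →
      b k i = b' k i) :
    homogeneousComponent (M + 1 + l) (Ntilde M N a b - Ntilde M N a' b') =
      X 0 ^ (l + 2) * X 1 * (X 1 + X 0) * C (∏ j ∈ Finset.Icc 1 (N - 1), a 1 j) *
        ∑ i ∈ (Finset.Icc 1 (M - 2)).filter (fun i => l + 1 ≤ N - 1 + 2 * i),
          C (b (l + 1) i - b' (l + 1) i) *
            ∏ j ∈ (Finset.Icc 1 (M - 2)).erase i, (X 1 + C (b 1 j) * X 0) := by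
  have degree_eq : M + 1 + l = (Finset.Icc 1 (M - 2)).card + 3 + l := by rw [Nat.card_Icc]; omega
  exact degree_eq ▸ stmt_13_general (fun i hi => (Finset.mem_Icc.mp hi).1) (by omega) hl ha hb
end
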